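/- Let μ, ν be probability measures on ℝ^d and σ > 0, with γ_σ = N(0, σ²·I_d). Then the Kullback–Leibler divergence KL(μ ∗ γ_σ ‖ ν ∗ γ_σ) equals 0 if and only if μ = ν. -/

import Mathlib

open MeasureTheory Real
open scoped ENNReal Classical

/-- The isotropic centered Gaussian measure `N(0, σ²·I_d)` on `ℝ^d`, given by its
density `(2πσ²)^(-d/2) · exp(-‖x‖²/(2σ²))` with respect to Lebesgue measure. -/
noncomputable def gaussianIso (d : ℕ) (σ : ℝ) : Measure (EuclideanSpace ℝ (Fin d)) :=
  volume.withDensity fun x =>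
    ENNReal.ofReal ((2 * π * σ ^ 2) ^ (-(d : ℝ) / 2) * Real.exp (-‖x‖ ^ 2 / (2 * σ ^ 2)))

/-- The Kullback–Leibler divergence `KL(P‖Q) = ∫ log (dP/dQ) dP` when `P ≪ Q`
(and the integral makes sense), and `+∞` otherwise. -/
noncomputable def KL {α : Type*} [MeasurableSpace α] (P Q : Measure α) : ℝ≥0∞ :=
  if P ≪ Q ∧ Integrable (fun x => Real.log (P.rnDeriv Q x).toReal) P then
    ENNReal.ofReal (∫ x, Real.log (P.rnDeriv Q x).toReal ∂P) else ⊤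

/-!
Convolution with `κ` multiplies characteristic functions by that of `κ`. Where the latter does not
vanish it can be cancelled, and since characteristic functions are continuous, a dense set of such
points suffices to recover the measure. The Gaussian qualifies because its characteristic
function is an exponential.
-/

section KullbackLeibler

variable {α : Type*} [MeasurableSpace α] {P Q : Measure α}

lemma KL_eq_klDiv_of_measure_univ_eq (hPQ : P .univ = Q .univ) :
    KL P Q = InformationTheory.klDiv P Q := by
  simp [KL, InformationTheory.klDiv_def, llr_def, measureReal_def, hPQ]

lemma KL_eq_zero_iff_of_measure_univ_eq [IsFiniteMeasure P] [IsFiniteMeasure Q]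
    (hPQ : P .univ = Q .univ) : KL P Q = 0 ↔ P = Q := by
  rw [KL_eq_klDiv_of_measure_univ_eq hPQ, InformationTheory.klDiv_eq_zero_iff]

end KullbackLeibler

lemma measure_univ_conv {M : Type*} [AddMonoid M] [MeasurableSpace M] [MeasurableAdd₂ M]
    (μ ν : Measure M) [SFinite ν] : (μ.conv ν) .univ = μ .univ * ν .univ := by
  rw [Measure.conv, Measure.map_apply measurable_add .univ, Set.preimage_univ,
    ← Set.univ_prod_univ, Measure.prod_prod]

section CharFun

variable {E : Type*} [NormedAddCommGroup E] [InnerProductSpace ℝ E] [MeasurableSpace E]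

lemma continuous_charFun_of_isFiniteMeasure [OpensMeasurableSpace E] [SecondCountableTopology E]
    (μ : Measure E) [IsFiniteMeasure μ] : Continuous (charFun μ) := by
  refine continuous_of_dominated (bound := fun _ => 1) (fun t => ?_) (fun t => ?_)
    (integrable_const 1) (.of_forall fun x => by fun_prop)
  · fun_prop
  · exact .of_forall fun x => (Complex.norm_exp_ofReal_mul_I _).le

lemma charFun_withDensity_ofReal (μ : Measure E) {f : E → ℝ} (hf : Measurable f)
    (hf_nonneg : 0 ≤ f) (t : E) :
    charFun (μ.withDensity fun x => ENNReal.ofReal (f x)) t =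
      ∫ x, (f x : ℂ) * Complex.exp (inner ℝ x t * Complex.I) ∂μ := by
  rw [charFun_apply, integral_withDensity_eq_integral_toReal_smul (by fun_prop)
    (.of_forall fun _ => ENNReal.ofReal_lt_top)]
  simp_rw [ENNReal.toReal_ofReal (hf_nonneg _), Complex.real_smul]

variable [BorelSpace E] [SecondCountableTopology E] [CompleteSpace E] {μ ν κ : Measure E}
  [IsFiniteMeasure μ] [IsFiniteMeasure ν] [IsFiniteMeasure κ]

lemma conv_eq_conv_iff_of_dense_charFun_ne_zero (hκ : Dense {t | charFun κ t ≠ 0}) :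
    μ.conv κ = ν.conv κ ↔ μ = ν := by
  refine ⟨fun h => Measure.ext_of_charFun ?_, fun h => h ▸ rfl⟩
  refine (continuous_charFun_of_isFiniteMeasure μ).ext_on hκ
    (continuous_charFun_of_isFiniteMeasure ν) fun t ht => mul_right_cancel₀ ht ?_
  rw [← charFun_conv, ← charFun_conv, h]

theorem spreadKL_eq_zero_iff_general (hμν : μ .univ = ν .univ)
    (hκ : Dense {t | charFun κ t ≠ 0}) : KL (μ.conv κ) (ν.conv κ) = 0 ↔ μ = ν := by
  have hconv : (μ.conv κ) .univ = (ν.conv κ) .univ := by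
    rw [measure_univ_conv, measure_univ_conv, hμν]
  rw [KL_eq_zero_iff_of_measure_univ_eq hconv, conv_eq_conv_iff_of_dense_charFun_ne_zero hκ]

end CharFun

section Gaussian

variable {σ : ℝ}

lemma integral_exp_neg_sq_norm_div_mul_cexp_inner {V : Type*} [NormedAddCommGroup V]
    [InnerProductSpace ℝ V] [FiniteDimensional ℝ V] [MeasurableSpace V] [BorelSpace V]
    (hσ : σ ≠ 0) (t : V) :
    ∫ x : V, (Real.exp (-‖x‖ ^ 2 / (2 * σ ^ 2)) : ℂ) * Complex.exp (inner ℝ x t * Complex.I) =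
      ((2 * π * σ ^ 2) ^ (Module.finrank ℝ V / 2 : ℝ) : ℝ) *
        Complex.exp (-(σ ^ 2 * ‖t‖ ^ 2 / 2)) := by
  have hb : 0 < (((2 * σ ^ 2)⁻¹ : ℝ) : ℂ).re := by
    rw [Complex.ofReal_re]
    positivity
  convert GaussianFourier.integral_cexp_neg_mul_sq_norm_add hb Complex.I t using 2
  · ext x
    rw [Complex.ofReal_exp, ← Complex.exp_add, real_inner_comm]
    push_cast
    ring_nf
  · rw [Complex.ofReal_cpow (by positivity)]
    push_cast
    field_simp
  · rw [Complex.I_sq]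
    push_cast
    congr 1
    field_simp
    norm_num

lemma charFun_gaussianIso (d : ℕ) (hσ : σ ≠ 0) (t : EuclideanSpace ℝ (Fin d)) :
    charFun (gaussianIso d σ) t = Complex.exp (-(σ ^ 2 * ‖t‖ ^ 2 / 2)) := by
  have hnormalized : (2 * π * σ ^ 2) ^ (-(d : ℝ) / 2) * (2 * π * σ ^ 2) ^ ((d : ℝ) / 2) = 1 := by
    rw [← Real.rpow_add (by positivity), neg_div, neg_add_cancel, Real.rpow_zero]
  rw [gaussianIso, charFun_withDensity_ofReal _ (by fun_prop) (fun x => by positivity)]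
  simp_rw [Complex.ofReal_mul, mul_assoc (_ : ℂ)]
  rw [integral_const_mul, integral_exp_neg_sq_norm_div_mul_cexp_inner hσ,
    finrank_euclideanSpace_fin, ← mul_assoc, ← Complex.ofReal_mul, hnormalized,
    Complex.ofReal_one, one_mul]

lemma isProbabilityMeasure_gaussianIso (d : ℕ) (hσ : σ ≠ 0) :
    IsProbabilityMeasure (gaussianIso d σ) := by
  have hmass := charFun_gaussianIso d hσ 0
  rw [charFun_zero] at hmass
  exact isProbabilityMeasure_iff_real.mpr (by simpa using hmass)

lemma dense_charFun_gaussianIso_ne_zero (d : ℕ) (hσ : σ ≠ 0) :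
    Dense {t | charFun (gaussianIso d σ) t ≠ 0} := by
  simp [charFun_gaussianIso d hσ, Complex.exp_ne_zero]

end Gaussian

/-- Validity of the spread (single-kernel diffusive) KL divergence:
`KL(μ ∗ γ_σ ‖ ν ∗ γ_σ) = 0` iff `μ = ν`. -/
theorem spreadKL_eq_zero_iff {d : ℕ} {σ : ℝ} (hσ : 0 < σ)
    (μ ν : Measure (EuclideanSpace ℝ (Fin d)))
    [IsProbabilityMeasure μ] [IsProbabilityMeasure ν] :
    KL (μ.conv (gaussianIso d σ)) (ν.conv (gaussianIso d σ)) = 0 ↔ μ = ν := by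
  have := isProbabilityMeasure_gaussianIso d hσ.ne'
  exact spreadKL_eq_zero_iff_general (by simp) (dense_charFun_gaussianIso_ne_zero d hσ.ne')
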